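/- For all Subjective Logic opinions T = (b_T,d_T,u_T) and C = (b_C,d_C,u_C), the combination W = T⊛C = (b_W,d_W,u_W) satisfies b_W ≤ b_T; equivalently, d_T + u_T ≤ d_W + u_W. -/

import Mathlib

/-- A Subjective Logic opinion: belief, disbelief, uncertainty. -/
def IsOpinion (b d u : ℝ) : Prop := 0 ≤ b ∧ 0 ≤ d ∧ 0 ≤ u ∧ b + d + u = 1

/-- The direction α_O of an opinion. -/
noncomputable def alphaO (b d u : ℝ) : ℝ :=
  if b = 1 then 0 else Real.arctan (Real.sqrt 3 * u / (2 * d + u))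

/-- The angle β_O of an opinion. -/
noncomputable def betaO (b d u : ℝ) : ℝ :=
  if d = 1 then Real.pi / 3 else Real.arctan (Real.sqrt 3 * u / (2 - 2 * d - u))

/-- The angle γ_O = π/3 − β_O. -/
noncomputable def gammaO (b d u : ℝ) : ℝ := Real.pi / 3 - betaO b d u

/-- The length |OU|. -/
noncomputable def distOU (b d u : ℝ) : ℝ := Real.sqrt ((1/3) * (1 + d - u)^2 + b^2)

/-- The angle δ_O. -/
noncomputable def deltaO (b d u : ℝ) : ℝ :=
  if u = 1 then 0 else Real.arcsin (b / distOU b d u)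

/-- The angle ε_O = π − γ_O − δ_O. -/
noncomputable def epsO (b d u : ℝ) : ℝ := Real.pi - gammaO b d u - deltaO b d u

/-- Cartesian x-coordinate of an opinion. -/
noncomputable def xO (d u : ℝ) : ℝ := (2 * d + u) / Real.sqrt 3

/-- Cartesian y-coordinate of an opinion. -/
noncomputable def yO (u : ℝ) : ℝ := u

/-- x-coordinate of the point M_O. -/
noncomputable def xM (b d u : ℝ) : ℝ :=
  (2 - yO u + Real.tan (alphaO b d u) * xO d u) / (Real.tan (alphaO b d u) + Real.sqrt 3)

/-- y-coordinate of the point M_O. -/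
noncomputable def yM (b d u : ℝ) : ℝ := -Real.sqrt 3 * xM b d u + 2

/-- The ratio r_O = |BO| / |BM_O|. -/
noncomputable def rO (b d u : ℝ) : ℝ :=
  Real.sqrt (xO d u ^ 2 + yO u ^ 2) / Real.sqrt (xM b d u ^ 2 + yM b d u ^ 2)

/-- The projected direction α' = (3/π)·α_C·ε_T − β_T. -/
noncomputable def alphaProj (bT dT uT bC dC uC : ℝ) : ℝ :=
  (3 / Real.pi) * alphaO bC dC uC * epsO bT dT uT - betaO bT dT uT

/-- The maximal length |TM_{C'}|. -/
noncomputable def Lmax (bT dT uT bC dC uC : ℝ) : ℝ :=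
  if alphaProj bT dT uT bC dC uC = Real.pi / 2 then 2 * bT
  else if alphaProj bT dT uT bC dC uC = -(Real.pi / 3) then (2 / Real.sqrt 3) * uT
  else if alphaProj bT dT uT bC dC uC = 2 * Real.pi / 3 then (2 / Real.sqrt 3) * (1 - uT)
  else (2 * Real.sqrt (Real.tan (alphaProj bT dT uT bC dC uC) ^ 2 + 1)
        / |Real.tan (alphaProj bT dT uT bC dC uC) + Real.sqrt 3|) * bT

/-- The length ℓ = |TC'| = r_C·|TM_{C'}|. -/
noncomputable def lenTC (bT dT uT bC dC uC : ℝ) : ℝ :=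
  rO bC dC uC * Lmax bT dT uT bC dC uC

/-- Uncertainty of the combination W = T⊛C. -/
noncomputable def uW (bT dT uT bC dC uC : ℝ) : ℝ :=
  uT + Real.sin (alphaProj bT dT uT bC dC uC) * lenTC bT dT uT bC dC uC

/-- Disbelief of the combination W = T⊛C. -/
noncomputable def dW (bT dT uT bC dC uC : ℝ) : ℝ :=
  dT + (uT - uW bT dT uT bC dC uC) * Real.cos (Real.pi / 3)
    + Real.cos (alphaProj bT dT uT bC dC uC) * Real.sin (Real.pi / 3)
      * lenTC bT dT uT bC dC uC

/-- Belief of the combination W = T⊛C. -/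
noncomputable def bW (bT dT uT bC dC uC : ℝ) : ℝ :=
  1 - dW bT dT uT bC dC uC - uW bT dT uT bC dC uC

/-!
The belief of a point decreases at the rate `sin (θ + π / 3)` along a direction `θ`, since it is
the distance to the edge `DU`, whose direction is `-π / 3`. From `T` the vertices `D` and `U` lie in
the directions `-β_T` and `ε_T - β_T`, and `α'` interpolates between these two with weight
`3 α_C / π ∈ [0, 1]`. Hence `γ_T ≤ α' + π / 3 ≤ γ_T + ε_T = π - δ_T`, and moving from `T` in the
direction `α'` by the nonnegative length `ℓ` cannot increase the belief.
-/

section Angles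

open Real

variable {b d u : ℝ}

theorem arctan_sqrt_three_mul_div_nonneg {x : ℝ} (hu : 0 ≤ u) (hx : 0 ≤ x) :
    0 ≤ arctan (√3 * u / x) :=
  arctan_nonneg.mpr (by positivity)

theorem arctan_sqrt_three_mul_div_le_pi_div_three {x : ℝ} (hx : 0 ≤ x) (hux : u ≤ x) :
    arctan (√3 * u / x) ≤ π / 3 := by
  rw [← arctan_sqrt_three, mul_div_assoc]
  exact arctan_mono (mul_le_of_le_one_right (sqrt_nonneg 3) (div_le_one_of_le₀ hux hx))

theorem alphaO_nonneg (hd : 0 ≤ d) (hu : 0 ≤ u) : 0 ≤ alphaO b d u := by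
  unfold alphaO
  split_ifs
  · exact le_rfl
  · exact arctan_sqrt_three_mul_div_nonneg hu (by positivity)

theorem alphaO_le_pi_div_three (hd : 0 ≤ d) (hu : 0 ≤ u) : alphaO b d u ≤ π / 3 := by
  unfold alphaO
  split_ifs
  · positivity
  · exact arctan_sqrt_three_mul_div_le_pi_div_three (by positivity) (by linarith)

theorem betaO_nonneg (hu : 0 ≤ u) (hdu : d + u ≤ 1) : 0 ≤ betaO b d u := by
  unfold betaO
  split_ifs
  · positivity
  · exact arctan_sqrt_three_mul_div_nonneg hu (by linarith)

theorem gammaO_nonneg (hu : 0 ≤ u) (hdu : d + u ≤ 1) : 0 ≤ gammaO b d u := by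
  unfold gammaO betaO
  split_ifs
  · exact (sub_self _).ge
  · exact sub_nonneg.mpr
      (arctan_sqrt_three_mul_div_le_pi_div_three (by linarith) (by linarith))

theorem deltaO_nonneg (hb : 0 ≤ b) : 0 ≤ deltaO b d u := by
  unfold deltaO
  split_ifs
  · exact le_rfl
  · exact arcsin_nonneg.mpr (div_nonneg hb (sqrt_nonneg _))

theorem deltaO_le_pi_div_two : deltaO b d u ≤ π / 2 := by
  unfold deltaO
  split_ifs
  · positivity
  · exact arcsin_le_pi_div_two _

theorem epsO_nonneg (hu : 0 ≤ u) (hdu : d + u ≤ 1) : 0 ≤ epsO b d u := by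
  have hβ : 0 ≤ betaO b d u := betaO_nonneg hu hdu
  have hδ : deltaO b d u ≤ π / 2 := deltaO_le_pi_div_two
  unfold epsO gammaO
  linarith [pi_pos]

theorem epsO_add_gammaO_le_pi (hb : 0 ≤ b) : epsO b d u + gammaO b d u ≤ π := by
  have hδ : 0 ≤ deltaO b d u := deltaO_nonneg hb
  unfold epsO
  linarith

theorem rO_nonneg : 0 ≤ rO b d u :=
  div_nonneg (sqrt_nonneg _) (sqrt_nonneg _)

end Angles

section Combination

open Real

variable {bT dT uT bC dC uC : ℝ}

theorem alphaProj_add_pi_div_three :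
    alphaProj bT dT uT bC dC uC + π / 3 =
      3 / π * alphaO bC dC uC * epsO bT dT uT + gammaO bT dT uT := by
  unfold alphaProj gammaO
  ring

theorem sin_alphaProj_add_pi_div_three_nonneg (hT : IsOpinion bT dT uT) (hdC : 0 ≤ dC)
    (huC : 0 ≤ uC) : 0 ≤ sin (alphaProj bT dT uT bC dC uC + π / 3) := by
  obtain ⟨hb, -, hu, hsum⟩ := hT
  have hdu : dT + uT ≤ 1 := by linarith
  have hε : 0 ≤ epsO bT dT uT := epsO_nonneg hu hdu
  have hγ : 0 ≤ gammaO bT dT uT := gammaO_nonneg hu hdu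
  have hα : 0 ≤ alphaO bC dC uC := alphaO_nonneg hdC huC
  have weight_le_one : 3 / π * alphaO bC dC uC ≤ 1 := by
    rw [div_mul_eq_mul_div, div_le_one pi_pos]
    linarith [alphaO_le_pi_div_three (b := bC) hdC huC]
  rw [alphaProj_add_pi_div_three]
  refine sin_nonneg_of_nonneg_of_le_pi (by positivity) ?_
  calc 3 / π * alphaO bC dC uC * epsO bT dT uT + gammaO bT dT uT
      ≤ epsO bT dT uT + gammaO bT dT uT := by
        gcongr
        exact mul_le_of_le_one_left hε weight_le_one
    _ ≤ π := epsO_add_gammaO_le_pi hb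

theorem Lmax_nonneg (hb : 0 ≤ bT) (hu : 0 ≤ uT) (hu_one : uT ≤ 1) :
    0 ≤ Lmax bT dT uT bC dC uC := by
  have : 0 ≤ 1 - uT := sub_nonneg.mpr hu_one
  unfold Lmax
  split_ifs <;> positivity

theorem lenTC_nonneg (hT : IsOpinion bT dT uT) : 0 ≤ lenTC bT dT uT bC dC uC := by
  obtain ⟨hb, hd, hu, hsum⟩ := hT
  exact mul_nonneg rO_nonneg (Lmax_nonneg hb hu (by linarith))

theorem dW_add_uW :
    dW bT dT uT bC dC uC + uW bT dT uT bC dC uC =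
      dT + uT + sin (alphaProj bT dT uT bC dC uC + π / 3) * lenTC bT dT uT bC dC uC := by
  unfold dW uW
  rw [sin_add, cos_pi_div_three]
  ring

theorem bW_le_iff (hsum : bT + dT + uT = 1) :
    bW bT dT uT bC dC uC ≤ bT ↔
      dT + uT ≤ dW bT dT uT bC dC uC + uW bT dT uT bC dC uC := by
  unfold bW
  constructor <;> intro h <;> linarith

end Combination

/-- For all Subjective Logic opinions T and C, the combination W = T⊛C satisfies
b_W ≤ b_T; equivalently, d_T + u_T ≤ d_W + u_W. -/
theorem stmt17 (bT dT uT bC dC uC : ℝ)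
    (hT : IsOpinion bT dT uT) (hC : IsOpinion bC dC uC) :
    bW bT dT uT bC dC uC ≤ bT ∧
    dT + uT ≤ dW bT dT uT bC dC uC + uW bT dT uT bC dC uC := by
  have h : dT + uT ≤ dW bT dT uT bC dC uC + uW bT dT uT bC dC uC := by
    rw [dW_add_uW]
    exact le_add_of_nonneg_right <|
      mul_nonneg (sin_alphaProj_add_pi_div_three_nonneg hT hC.2.1 hC.2.2.1) (lenTC_nonneg hT)
  exact ⟨(bW_le_iff hT.2.2.2).mpr h, h⟩
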